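/- Let W be a discrete memoryless channel with R_cr < C, and suppose Q ∈ P(𝒳) and R > 0 are such that the pair (Q,W) is nonsingular and R_cr(Q) < R < I(Q;W). Let ρ*_R(Q) := −∂E_r(a,Q)/∂a evaluated at a = R. Then there exists a constant K₂ > 0, depending only on W, R and Q, such that for every positive integer N the ensemble average error probability satisfies P̄_e(Q,N,R) ≤ K₂ · N^{−(1+ρ*_R(Q))/2} · e^{−N·E_r(R,Q)}. -/

import Mathlib

open Real BigOperators
open scoped Classical

namespace RCB

/-- A probability distribution on a finite alphabet. -/
def IsDist {α : Type*} [Fintype α] (Q : α → ℝ) : Prop :=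
  (∀ a, 0 ≤ Q a) ∧ ∑ a, Q a = 1

/-- A discrete memoryless channel, i.e. a stochastic matrix from `X` to `Y`. -/
def IsChannel {X Y : Type*} [Fintype X] [Fintype Y] (W : X → Y → ℝ) : Prop :=
  (∀ x y, 0 ≤ W x y) ∧ ∀ x, ∑ y, W x y = 1

/-- The Gallager function `E_o(ρ, Q)`. -/
noncomputable def Eo {X Y : Type*} [Fintype X] [Fintype Y]
    (W : X → Y → ℝ) (ρ : ℝ) (Q : X → ℝ) : ℝ :=
  - Real.log (∑ y, (∑ x, Q x * W x y ^ (1 / (1 + ρ))) ^ (1 + ρ))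

/-- The random coding exponent `E_r(R, Q)` for input distribution `Q`. -/
noncomputable def ErQ {X Y : Type*} [Fintype X] [Fintype Y]
    (W : X → Y → ℝ) (R : ℝ) (Q : X → ℝ) : ℝ :=
  sSup ((fun ρ => -ρ * R + Eo W ρ Q) '' Set.Icc (0 : ℝ) 1)

/-- The random coding exponent `E_r(R)`. -/
noncomputable def Er {X Y : Type*} [Fintype X] [Fintype Y]
    (W : X → Y → ℝ) (R : ℝ) : ℝ :=
  sSup {v : ℝ | ∃ Q : X → ℝ, IsDist Q ∧ v = ErQ W R Q}

/-- The mutual information `I(Q; W)` (natural logarithm). -/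
noncomputable def MI {X Y : Type*} [Fintype X] [Fintype Y]
    (W : X → Y → ℝ) (Q : X → ℝ) : ℝ :=
  ∑ x, ∑ y, Q x * W x y * Real.log (W x y / ∑ x', Q x' * W x' y)

/-- The capacity `C = max_Q I(Q;W)`. -/
noncomputable def Capacity {X Y : Type*} [Fintype X] [Fintype Y]
    (W : X → Y → ℝ) : ℝ :=
  sSup {v : ℝ | ∃ Q : X → ℝ, IsDist Q ∧ v = MI W Q}

/-- The critical rate of the input distribution `Q`:
`R_cr(Q) = ∂E_o(ρ,Q)/∂ρ |_{ρ=1}`. -/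
noncomputable def RcrQ {X Y : Type*} [Fintype X] [Fintype Y]
    (W : X → Y → ℝ) (Q : X → ℝ) : ℝ :=
  deriv (fun ρ => Eo W ρ Q) 1

/-- The critical rate of the channel: the largest `R` with
`E_r(R) = -R + max_Q E_o(1,Q)`. -/
noncomputable def Rcr {X Y : Type*} [Fintype X] [Fintype Y]
    (W : X → Y → ℝ) : ℝ :=
  sSup {R : ℝ | Er W R = -R + sSup {v : ℝ | ∃ Q : X → ℝ, IsDist Q ∧ v = Eo W 1 Q}}

/-- The rate `R_∞ = inf {R ≥ 0 : E_SP(R) < ∞}` (finiteness of the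
sphere-packing exponent expressed as boundedness of the family of affine maps). -/
noncomputable def Rinf {X Y : Type*} [Fintype X] [Fintype Y]
    (W : X → Y → ℝ) : ℝ :=
  sInf {R : ℝ | 0 ≤ R ∧
    BddAbove {v : ℝ | ∃ (Q : X → ℝ) (ρ : ℝ), IsDist Q ∧ 0 ≤ ρ ∧ v = -ρ * R + Eo W ρ Q}}

/-- The pair `(Q, W)` is singular if `W(y|x) = W(y|z)` whenever
`Q(x)W(y|x)Q(z)W(y|z) > 0`. -/
def Singular {X Y : Type*} (W : X → Y → ℝ) (Q : X → ℝ) : Prop :=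
  ∀ x y z, 0 < Q x * W x y * (Q z * W z y) → W x y = W z y

/-- `ρ^*_R(Q) = -∂E_r(a,Q)/∂a |_{a=R}`. -/
noncomputable def rhoStarQ {X Y : Type*} [Fintype X] [Fintype Y]
    (W : X → Y → ℝ) (Q : X → ℝ) (R : ℝ) : ℝ :=
  - deriv (fun a => ErQ W a Q) R

/-- The number of messages of an `(N, R)` code: `⌈exp (N R)⌉`. -/
noncomputable def nMsgs (N : ℕ) (R : ℝ) : ℕ := ⌈Real.exp (N * R)⌉₊

/-- The `N`-fold memoryless extension of the channel `W`. -/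
noncomputable def Wn {X Y : Type*} (W : X → Y → ℝ) {N : ℕ}
    (c : Fin N → X) (y : Fin N → Y) : ℝ :=
  ∏ n, W (c n) (y n)

/-- The maximal error probability of the code `(f, φ)` over the `N`-fold
memoryless extension of `W`. -/
noncomputable def Pmax {X Y : Type*} [Fintype X] [Fintype Y] {M N : ℕ}
    (W : X → Y → ℝ) (f : Fin M → Fin N → X) (φ : (Fin N → Y) → Fin M) : ℝ :=
  ⨆ m : Fin M, ∑ y : Fin N → Y, Wn W (f m) y * (if φ y ≠ m then (1 : ℝ) else 0)

/-- The ensemble average error probability `P̄_e(Q, N, R)`: the `⌈exp (N R)⌉`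
codewords are drawn i.i.d. from `Q^N` and decoded by maximum-likelihood
decoding, ties counted as errors. -/
noncomputable def Pbar {X Y : Type*} [Fintype X] [Fintype Y]
    (W : X → Y → ℝ) (Q : X → ℝ) (N : ℕ) (R : ℝ) : ℝ :=
  ∑ c : Fin (nMsgs N R) → Fin N → X,
    (∏ m, ∏ n, Q (c m n)) *
      ((nMsgs N R : ℝ)⁻¹ *
        ∑ m, ∑ y : Fin N → Y,
          Wn W (c m) y *
            (if ∃ m', m' ≠ m ∧ Wn W (c m) y ≤ Wn W (c m') y then (1 : ℝ) else 0))

/-- The tilted output distribution `f_ρ`. -/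
noncomputable def fRho {X Y : Type*} [Fintype X] [Fintype Y]
    (W : X → Y → ℝ) (Q : X → ℝ) (ρ : ℝ) (y : Y) : ℝ :=
  (∑ x, Q x * W x y ^ (1 / (1 + ρ))) ^ (1 + ρ) /
    ∑ b, (∑ a, Q a * W a b ^ (1 / (1 + ρ))) ^ (1 + ρ)

/-- The cumulant generating function
`Λ_ρ(λ) = log E_{P_{X,Y}}[exp(λ log (f_ρ(Y)/W(Y|X)))]` with `P_{X,Y} = Q × W`. -/
noncomputable def Lam {X Y : Type*} [Fintype X] [Fintype Y]
    (W : X → Y → ℝ) (Q : X → ℝ) (ρ : ℝ) (t : ℝ) : ℝ :=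
  Real.log (∑ x, ∑ y, Q x * W x y * Real.exp (t * Real.log (fRho W Q ρ y / W x y)))

/-- `P_{X,Y,Z}(S̃_Q)` where `P_{X,Y,Z}(x,y,z) = Q(x)W(y|x)Q(z)` and
`S̃_Q = {(x,y,z) : Q(x)W(y|x)Q(z)W(y|z) > 0}`. -/
noncomputable def PStilde {X Y : Type*} [Fintype X] [Fintype Y]
    (W : X → Y → ℝ) (Q : X → ℝ) : ℝ :=
  ∑ x, ∑ y, ∑ z,
    if 0 < Q x * W x y * (Q z * W z y) then Q x * W x y * Q z else 0

/-- The bivariate cumulant generating function `Λ_{1,ρ}(v)` with respect to the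
conditional distribution `P̃_{X,Y,Z}` of `P_{X,Y,Z}` given `S̃_Q`. -/
noncomputable def Lam1 {X Y : Type*} [Fintype X] [Fintype Y]
    (W : X → Y → ℝ) (Q : X → ℝ) (ρ : ℝ) (v : ℝ × ℝ) : ℝ :=
  Real.log ((∑ x, ∑ y, ∑ z,
    if 0 < Q x * W x y * (Q z * W z y) then
      Q x * W x y * Q z *
        Real.exp (v.1 * Real.log (W x y / fRho W Q ρ y) +
          v.2 * Real.log (W z y / W x y))
    else 0) / PStilde W Q)

/-- The subdifferential of `f : ℝ → ℝ` at `R` (for convex `f`). -/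
def Subderiv (f : ℝ → ℝ) (R : ℝ) : Set ℝ :=
  {g : ℝ | ∀ x, f R + g * (x - R) ≤ f x}

/-- The tilted backward channel `P^ρ_{X|Y}`. -/
noncomputable def PXgY {X Y : Type*} [Fintype X]
    (W : X → Y → ℝ) (Q : X → ℝ) (ρ : ℝ) (x : X) (y : Y) : ℝ :=
  Q x * W x y ^ (1 / (1 + ρ)) / ∑ a, Q a * W a y ^ (1 / (1 + ρ))

/-- The tilted joint distribution `P^ρ_{X,Y}(x,y) = P^ρ_{X|Y}(x|y) P^ρ_Y(y)`. -/
noncomputable def PXY {X Y : Type*} [Fintype X] [Fintype Y]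
    (W : X → Y → ℝ) (Q : X → ℝ) (ρ : ℝ) (x : X) (y : Y) : ℝ :=
  PXgY W Q ρ x y * fRho W Q ρ y

/-!
Weight a codeword `x`, given the output `y`, by the tilted backward channel
`PXgY ∝ Q(x) W(y|x)^{1/(1+ρ)}`. With `T` a suitable multiple of `e^{NR}`, the union bound for `x`
is then of the form `min 1 (T e^{-l/(1+ρ)})`, where `l` is the log-likelihood of `x`, so what
remains is the mass that the tilted law puts, up to exponentially decaying tails, within bounded
distance of one value of `l`. If `(Q, W)` is nonsingular, some output letter `y₀` is reached from
two inputs with different transition probabilities. Each occurrence of `y₀` in `y` hence makes `l`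
choose between two distinct values, and by the central binomial bound this mass is
`O(k^{-1/2})`, where `k` is the number of occurrences. The same anticoncentration estimate applies
to the competing codeword and to the transmitted one; the former enters with power `ρ`, which
gives the factor `k^{-(1+ρ)/2}`. Under the tilted output distribution `fRho`, `k` is of order `N`.
The hypotheses on `R` make the optimal `ρ` an interior point of `[0, 1]`, and there the kernel
`min 1 (e^t)` is dominated by `e^{ρ t}` times a two-sided exponential.
-/

section

open Finset

/-! ### Binomial coefficients and negative powers -/

theorem centralBinom_sq_mul_le (n : ℕ) : n.centralBinom ^ 2 * (2 * n + 1) ≤ 16 ^ n := by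
  induction n with
  | zero => simp
  | succ n ih =>
    refine Nat.le_of_mul_le_mul_left (c := (n + 1) ^ 2) ?_ (by positivity)
    calc (n + 1) ^ 2 * ((n + 1).centralBinom ^ 2 * (2 * (n + 1) + 1))
        = ((n + 1) * (n + 1).centralBinom) ^ 2 * (2 * n + 3) := by ring
      _ = n.centralBinom ^ 2 * (2 * n + 1) * (4 * (2 * n + 1) * (2 * n + 3)) := by
          rw [Nat.succ_mul_centralBinom_succ]; ring
      _ ≤ 16 ^ n * (16 * (n + 1) ^ 2) := Nat.mul_le_mul ih (by nlinarith)
      _ = (n + 1) ^ 2 * 16 ^ (n + 1) := by ring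

theorem choose_half_sq_mul_le (j : ℕ) : j.choose (j / 2) ^ 2 * (j + 1) ≤ 4 ^ j := by
  obtain ⟨n, rfl | rfl⟩ := j.even_or_odd'
  · rw [Nat.mul_div_cancel_left n two_pos, pow_mul]
    exact centralBinom_sq_mul_le n
  · have hcentral : (n + 1).centralBinom = 2 * (2 * n + 1).choose n := by
      rw [Nat.centralBinom, show 2 * (n + 1) = 2 * n + 1 + 1 by ring, Nat.choose_succ_succ,
        Nat.choose_symm_half]
      ring
    have h := centralBinom_sq_mul_le (n + 1)
    rw [hcentral, pow_succ 16 n] at h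
    rw [show (2 * n + 1) / 2 = n by omega,
      show 4 ^ (2 * n + 1) = 4 * 16 ^ n by rw [pow_succ, pow_mul, mul_comm]; norm_num]
    nlinarith

theorem choose_div_two_pow_le (j i : ℕ) :
    (j.choose i : ℝ) / 2 ^ j ≤ ((j : ℝ) + 1) ^ (-(1 / 2) : ℝ) := by
  have hsq : (j.choose i : ℝ) ^ 2 * (j + 1) ≤ 4 ^ j := by
    have : j.choose i ^ 2 * (j + 1) ≤ 4 ^ j :=
      (Nat.mul_le_mul_right _ (Nat.pow_le_pow_left (Nat.choose_le_middle i j) 2)).trans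
        (choose_half_sq_mul_le j)
    exact_mod_cast this
  have hj : (0 : ℝ) < j + 1 := by positivity
  rw [Real.rpow_neg hj.le, ← Real.sqrt_eq_rpow, div_le_iff₀ (by positivity), ← div_eq_inv_mul,
    le_div_iff₀ (by positivity)]
  refine le_of_sq_le_sq ?_ (by positivity)
  calc ((j.choose i : ℝ) * √(j + 1)) ^ 2 = (j.choose i : ℝ) ^ 2 * (j + 1) := by
        rw [mul_pow, Real.sq_sqrt hj.le]
    _ ≤ 4 ^ j := hsq
    _ = (2 ^ j) ^ 2 := by rw [← pow_mul, mul_comm, pow_mul]; norm_num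

theorem mul_inv_add_one_add_mul_inv_le {p u : ℝ} (hp : 0 ≤ p) (hu : 1 ≤ u) :
    p * (u + 1)⁻¹ + (1 - p) * u⁻¹ ≤ (u + p / 2)⁻¹ := by
  have : 0 < u := by linarith
  have hdiff : (u + p / 2)⁻¹ - (p * (u + 1)⁻¹ + (1 - p) * u⁻¹)
      = (p / 2 * (u - 1) + p ^ 2 / 2) / ((u + p / 2) * (u + 1) * u) := by
    field_simp
    ring
  have : 0 ≤ p / 2 * (u - 1) := mul_nonneg (by positivity) (by linarith)
  rw [← sub_nonneg, hdiff]
  positivity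

theorem mul_rpow_neg_add_mul_rpow_neg_le {p u β : ℝ} (hp0 : 0 ≤ p) (hp1 : p ≤ 1) (hu : 1 ≤ u)
    (hβ0 : 0 ≤ β) (hβ1 : β ≤ 1) :
    p * (u + 1) ^ (-β) + (1 - p) * u ^ (-β) ≤ (u + p / 2) ^ (-β) := by
  have hp1' : 0 ≤ 1 - p := sub_nonneg.2 hp1
  have hconcave : p * (u + 1)⁻¹ ^ β + (1 - p) * u⁻¹ ^ β
      ≤ (p * (u + 1)⁻¹ + (1 - p) * u⁻¹) ^ β := by
    simpa only [smul_eq_mul] using (Real.concaveOn_rpow hβ0 hβ1).2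
      (Set.mem_Ici.2 (by positivity : 0 ≤ (u + 1)⁻¹)) (Set.mem_Ici.2 (by positivity : 0 ≤ u⁻¹))
      hp0 hp1' (by ring)
  rw [Real.rpow_neg_eq_inv_rpow, Real.rpow_neg_eq_inv_rpow, Real.rpow_neg_eq_inv_rpow]
  exact hconcave.trans
    (Real.rpow_le_rpow (by positivity) (mul_inv_add_one_add_mul_inv_le hp0 hu) hβ0)

/-! ### Two-sided exponentials along an arithmetic progression -/

theorem sum_exp_neg_abs_le_of_nonneg {κ δ a : ℝ} (hκ : 0 < κ) (hδ : 0 < δ) (ha : 0 ≤ a) (n : ℕ) :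
    ∑ i ∈ range n, exp (-κ * |a + δ * i|) ≤ (1 - exp (-κ * δ))⁻¹ := by
  have hr : exp (-κ * δ) < 1 := Real.exp_lt_one_iff.2 (by nlinarith [mul_pos hκ hδ])
  calc ∑ i ∈ range n, exp (-κ * |a + δ * i|) ≤ ∑ i ∈ range n, exp (-κ * δ) ^ i := by
        refine sum_le_sum fun i _ => ?_
        rw [← Real.exp_nat_mul, exp_le_exp, abs_of_nonneg (by positivity)]
        nlinarith
    _ ≤ ∑' i, exp (-κ * δ) ^ i :=
        (summable_geometric_of_lt_one (exp_pos _).le hr).sum_le_tsum _ fun i _ => by positivity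
    _ = (1 - exp (-κ * δ))⁻¹ := tsum_geometric_of_lt_one (exp_pos _).le hr

theorem sum_exp_neg_abs_le {κ δ : ℝ} (hκ : 0 < κ) (hδ : 0 < δ) (a : ℝ) (n : ℕ) :
    ∑ i ∈ range n, exp (-κ * |a + δ * i|) ≤ 2 * (1 - exp (-κ * δ))⁻¹ := by
  -- The first `m` terms are those with `a + δ * i < 0`.
  set m := ⌈-a / δ⌉₊
  have hneg : ∑ i ∈ range m, exp (-κ * |a + δ * i|) ≤ (1 - exp (-κ * δ))⁻¹ := by
    rcases Nat.eq_zero_or_pos m with hm | hm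
    · have hr : exp (-κ * δ) < 1 := Real.exp_lt_one_iff.2 (by nlinarith [mul_pos hκ hδ])
      simpa only [hm, range_zero, sum_empty] using inv_nonneg.2 (sub_nonneg.2 hr.le)
    · have hlast : a + δ * ((m - 1 : ℕ) : ℝ) ≤ 0 := by
        have : ((m - 1 : ℕ) : ℝ) < -a / δ := Nat.lt_ceil.1 (Nat.sub_lt hm one_pos)
        rw [lt_div_iff₀ hδ] at this
        linarith
      rw [← sum_range_reflect]
      refine le_of_eq_of_le (sum_congr rfl fun i hi => ?_)
        (sum_exp_neg_abs_le_of_nonneg hκ hδ (neg_nonneg.2 hlast) m)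
      rw [Nat.cast_sub (Nat.le_sub_one_of_lt (mem_range.1 hi)), ← abs_neg]
      ring_nf
  have hnonneg : ∑ i ∈ range n, exp (-κ * |a + δ * ((m + i : ℕ) : ℝ)|)
      ≤ (1 - exp (-κ * δ))⁻¹ := by
    have hfirst : 0 ≤ a + δ * m := by
      have := (div_le_iff₀ hδ).1 (Nat.le_ceil (-a / δ))
      linarith
    refine le_of_eq_of_le (sum_congr rfl fun i _ => ?_)
      (sum_exp_neg_abs_le_of_nonneg hκ hδ hfirst n)
    rw [Nat.cast_add, mul_add, ← add_assoc]
  calc ∑ i ∈ range n, exp (-κ * |a + δ * i|) ≤ ∑ i ∈ range (m + n), exp (-κ * |a + δ * i|) :=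
        sum_le_sum_of_subset_of_nonneg (range_mono (by omega)) fun _ _ _ => (exp_pos _).le
    _ ≤ 2 * (1 - exp (-κ * δ))⁻¹ := by
        rw [sum_range_add]
        linarith

/-! ### Anticoncentration of sums of independent letters -/

/-- The average of `f` over `a + δ J`, where `J` is binomial with parameters `j` and `1 / 2`. -/
noncomputable def binomialAverage (f : ℝ → ℝ) (δ : ℝ) (j : ℕ) (a : ℝ) : ℝ :=
  ∑ i ∈ range (j + 1), (j.choose i : ℝ) / 2 ^ j * f (a + δ * i)

theorem binomialAverage_zero (f : ℝ → ℝ) (δ a : ℝ) : binomialAverage f δ 0 a = f a := by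
  simp [binomialAverage]

theorem binomialAverage_succ (f : ℝ → ℝ) (δ : ℝ) (j : ℕ) (a : ℝ) :
    binomialAverage f δ (j + 1) a
      = (binomialAverage f δ j a + binomialAverage f δ j (a + δ)) / 2 := by
  simp only [binomialAverage, div_mul_eq_mul_div, ← sum_div]
  rw [sum_choose_succ_mul (fun i _ => f (a + δ * (i : ℕ))) j, pow_succ, ← add_div, div_div]
  congr 2
  refine sum_congr rfl fun i _ => ?_
  push_cast
  ring_nf

theorem binomialAverage_le {f : ℝ → ℝ} {δ B : ℝ} (hf : ∀ t, 0 ≤ f t)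
    (hB : ∀ a n, ∑ i ∈ range n, f (a + δ * i) ≤ B) (j : ℕ) (a : ℝ) :
    binomialAverage f δ j a ≤ B * ((j : ℝ) + 1) ^ (-(1 / 2) : ℝ) := by
  calc binomialAverage f δ j a
      ≤ ∑ i ∈ range (j + 1), ((j : ℝ) + 1) ^ (-(1 / 2) : ℝ) * f (a + δ * i) :=
        sum_le_sum fun i _ => mul_le_mul_of_nonneg_right (choose_div_two_pow_le j i) (hf _)
    _ = (∑ i ∈ range (j + 1), f (a + δ * i)) * ((j : ℝ) + 1) ^ (-(1 / 2) : ℝ) := by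
        rw [← mul_sum, mul_comm]
    _ ≤ B * ((j : ℝ) + 1) ^ (-(1 / 2) : ℝ) :=
        mul_le_mul_of_nonneg_right (hB a (j + 1)) (by positivity)

theorem sum_pi_fin_succ {α : Type*} [Fintype α] {N : ℕ} (F : (Fin (N + 1) → α) → ℝ) :
    ∑ x, F x = ∑ a, ∑ x : Fin N → α, F (Fin.cons a x) := by
  rw [← (Fin.consEquiv fun _ : Fin (N + 1) => α).sum_comp, Fintype.sum_prod_type]
  rfl

/-- The expectation of `f (∑ n, w n (x n))` when the letters `x n` are independent and `x n` has
law `P n`. -/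
noncomputable def productAverage {X : Type*} [Fintype X] {N : ℕ} (P w : Fin N → X → ℝ)
    (f : ℝ → ℝ) : ℝ :=
  ∑ x : Fin N → X, (∏ n, P n (x n)) * f (∑ n, w n (x n))

section ProductAverage

variable {X : Type*} [Fintype X] {N : ℕ}

theorem productAverage_fin_zero (P w : Fin 0 → X → ℝ) (f : ℝ → ℝ) :
    productAverage P w f = f 0 := by
  simp [productAverage]

theorem productAverage_fin_succ (P w : Fin (N + 1) → X → ℝ) (f : ℝ → ℝ) :
    productAverage P w f = ∑ z, P 0 z *
      productAverage (fun n => P n.succ) (fun n => w n.succ) (fun t => f (w 0 z + t)) := by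
  simp only [productAverage, sum_pi_fin_succ, Fin.prod_univ_succ, Fin.sum_univ_succ,
    Fin.cons_zero, Fin.cons_succ, mul_sum, mul_assoc]

theorem productAverage_half_add (P w : Fin N → X → ℝ) (f g : ℝ → ℝ) :
    productAverage P w (fun t => (f t + g t) / 2)
      = (productAverage P w f + productAverage P w g) / 2 := by
  simp only [productAverage, ← sum_add_distrib, sum_div]
  exact sum_congr rfl fun x _ => by ring

theorem sum_mul_le_of_two_atoms {V H : X → ℝ} {m A B : ℝ} {x₁ x₂ : X} (hV : ∀ x, 0 ≤ V x)
    (hV1 : ∑ x, V x ≤ 1) (hx : x₁ ≠ x₂) (hm : 0 ≤ m) (hm1 : m ≤ V x₁) (hm2 : m ≤ V x₂)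
    (hA : 0 ≤ A) (hHA : ∀ x, H x ≤ A) (hHB : (H x₁ + H x₂) / 2 ≤ B) :
    ∑ x, V x * H x ≤ 2 * m * B + (1 - 2 * m) * A := by
  set V' : X → ℝ := fun x => V x - (if x = x₁ then m else 0) - (if x = x₂ then m else 0) with hV'
  have hV'0 : ∀ x, 0 ≤ V' x := by
    intro x
    by_cases h1 : x = x₁
    · subst h1; simp [hV', hx, hm1]
    · by_cases h2 : x = x₂
      · subst h2; simp [hV', h1, hm2]
      · simp [hV', h1, h2, hV]
  have hV'1 : ∑ x, V' x ≤ 1 - 2 * m := by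
    simp only [hV', sum_sub_distrib, sum_ite_eq', mem_univ, if_true]
    linarith
  have hsplit : ∑ x, V x * H x = ∑ x, V' x * H x + 2 * m * ((H x₁ + H x₂) / 2) := by
    simp only [hV', sub_mul, sum_sub_distrib, ite_mul, zero_mul, sum_ite_eq', mem_univ, if_true]
    ring
  have hrest : ∑ x, V' x * H x ≤ (1 - 2 * m) * A :=
    calc ∑ x, V' x * H x ≤ ∑ x, V' x * A :=
          sum_le_sum fun x _ => mul_le_mul_of_nonneg_left (hHA x) (hV'0 x)
      _ ≤ (1 - 2 * m) * A := by
          rw [← sum_mul]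
          exact mul_le_mul_of_nonneg_right hV'1 hA
  have hatoms : 2 * m * ((H x₁ + H x₂) / 2) ≤ 2 * m * B :=
    mul_le_mul_of_nonneg_left hHB (by positivity)
  linarith

theorem sum_mul_le_mul_rpow_neg_of_two_atoms {V H : X → ℝ} {m B u β : ℝ} {x₁ x₂ : X}
    (hV : ∀ x, 0 ≤ V x) (hV1 : ∑ x, V x ≤ 1) (hx : x₁ ≠ x₂) (hm : 0 ≤ m) (hm1 : m ≤ V x₁)
    (hm2 : m ≤ V x₂) (hB : 0 ≤ B) (hu : 1 ≤ u) (hβ0 : 0 ≤ β) (hβ1 : β ≤ 1)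
    (hH : ∀ x, H x ≤ B * u ^ (-β)) (hH12 : (H x₁ + H x₂) / 2 ≤ B * (u + 1) ^ (-β)) :
    ∑ x, V x * H x ≤ B * (u + m) ^ (-β) := by
  have hm12 : 2 * m ≤ 1 := by
    have := (sum_le_univ_sum_of_nonneg (s := {x₁, x₂}) hV).trans hV1
    rw [sum_pair hx] at this
    linarith
  calc ∑ x, V x * H x
      ≤ 2 * m * (B * (u + 1) ^ (-β)) + (1 - 2 * m) * (B * u ^ (-β)) :=
        sum_mul_le_of_two_atoms hV hV1 hx hm hm1 hm2 (by positivity) hH hH12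
    _ = B * (2 * m * (u + 1) ^ (-β) + (1 - 2 * m) * u ^ (-β)) := by ring
    _ ≤ B * (u + 2 * m / 2) ^ (-β) :=
        mul_le_mul_of_nonneg_left
          (mul_rpow_neg_add_mul_rpow_neg_le (by positivity) hm12 hu hβ0 hβ1) hB
    _ = B * (u + m) ^ (-β) := by rw [mul_div_cancel_left₀ m two_ne_zero]

/-- Each site of `J` carries a fair choice between `x₁` and `x₂` with probability `2 m`, and such a
choice turns a binomial average of order `j` into one of order `j + 1`. -/
theorem productAverage_binomialAverage_le {P w : Fin N → X → ℝ} {J : Fin N → Prop} {m δ B : ℝ}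
    {f : ℝ → ℝ} (hP : ∀ n x, 0 ≤ P n x) (hP1 : ∀ n, ∑ x, P n x ≤ 1) (hm : 0 ≤ m)
    (hJ : ∀ n, J n → ∃ x₁ x₂, x₁ ≠ x₂ ∧ m ≤ P n x₁ ∧ m ≤ P n x₂ ∧ w n x₂ = w n x₁ + δ)
    (hf : ∀ t, 0 ≤ f t) (hB : ∀ a n, ∑ i ∈ range n, f (a + δ * i) ≤ B) (j : ℕ) (a : ℝ) :
    productAverage P w (fun t => binomialAverage f δ j (a + t))
      ≤ B * (m * #{n | J n} + j + 1) ^ (-(1 / 2) : ℝ) := by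
  have hB0 : 0 ≤ B := by simpa using hB 0 0
  induction N generalizing j a with
  | zero => simpa [productAverage_fin_zero] using binomialAverage_le hf hB j a
  | succ N ih =>
    set u : ℝ := m * #{n : Fin N | J n.succ} + j + 1 with hu
    have hu1 : 1 ≤ u := by rw [hu, le_add_iff_nonneg_left]; positivity
    set H : X → ℝ := fun z => productAverage (fun n => P n.succ) (fun n => w n.succ)
      fun t => binomialAverage f δ j (a + (w 0 z + t)) with hH
    have ihN := ih (fun n => hP n.succ) (fun n => hP1 n.succ) fun n => hJ n.succ
    have hHu : ∀ z, H z ≤ B * u ^ (-(1 / 2) : ℝ) := fun z => by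
      have h := ihN j (a + w 0 z)
      simp only [add_assoc a (w 0 z)] at h
      exact h
    rw [productAverage_fin_succ, Fin.card_filter_univ_succ]
    split_ifs with hJ0
    · obtain ⟨x₁, x₂, hx, hm1, hm2, hw⟩ := hJ 0 hJ0
      have hHavg : (H x₁ + H x₂) / 2 ≤ B * (u + 1) ^ (-(1 / 2) : ℝ) := by
        have h := ihN (j + 1) (a + w 0 x₁)
        simp only [binomialAverage_succ, productAverage_half_add] at h
        simp only [hH, hw]
        convert h using 1
        · ring_nf
        · rw [hu]; push_cast; ring_nf
      calc ∑ z, P 0 z * H z ≤ B * (u + m) ^ (-(1 / 2) : ℝ) :=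
            sum_mul_le_mul_rpow_neg_of_two_atoms (hP 0) (hP1 0) hx hm hm1 hm2 hB0 hu1
              (by norm_num) (by norm_num) hHu hHavg
        _ = B * (m * ↑(#{n : Fin N | J n.succ} + 1) + j + 1) ^ (-(1 / 2) : ℝ) := by
            rw [hu]; push_cast; ring_nf
    · calc ∑ z, P 0 z * H z ≤ ∑ z, P 0 z * (B * u ^ (-(1 / 2) : ℝ)) :=
            sum_le_sum fun z _ => mul_le_mul_of_nonneg_left (hHu z) (hP 0 z)
        _ ≤ B * u ^ (-(1 / 2) : ℝ) := by
            rw [← sum_mul]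
            exact mul_le_of_le_one_left (by positivity) (hP1 0)

theorem productAverage_le {P w : Fin N → X → ℝ} {J : Fin N → Prop} {m δ B : ℝ} {f : ℝ → ℝ}
    (hP : ∀ n x, 0 ≤ P n x) (hP1 : ∀ n, ∑ x, P n x ≤ 1) (hm : 0 ≤ m)
    (hJ : ∀ n, J n → ∃ x₁ x₂, x₁ ≠ x₂ ∧ m ≤ P n x₁ ∧ m ≤ P n x₂ ∧ w n x₂ = w n x₁ + δ)
    (hf : ∀ t, 0 ≤ f t) (hB : ∀ a n, ∑ i ∈ range n, f (a + δ * i) ≤ B) :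
    productAverage P w f ≤ B * (m * #{n | J n} + 1) ^ (-(1 / 2) : ℝ) := by
  simpa [binomialAverage_zero] using productAverage_binomialAverage_le hP hP1 hm hJ hf hB 0 0

end ProductAverage

/-! ### Product distributions -/

section IsDist

variable {α : Type*} [Fintype α] {q : α → ℝ}

theorem IsDist.pi (hq : IsDist q) (N : ℕ) : IsDist fun x : Fin N → α => ∏ n, q (x n) :=
  ⟨fun _ => prod_nonneg fun _ _ => hq.1 _, by rw [← Fintype.sum_pow, hq.2, one_pow]⟩

theorem IsDist.exists_pos (hq : IsDist q) : ∃ a, 0 < q a := by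
  by_contra! h
  have := hq.2
  rw [sum_eq_zero fun a _ => (h a).antisymm (hq.1 a)] at this
  exact zero_ne_one this

theorem IsDist.le_one (hq : IsDist q) (a : α) : q a ≤ 1 :=
  hq.2 ▸ single_le_sum (fun b _ => hq.1 b) (mem_univ a)

theorem IsDist.sum_indicator_le_one (hq : IsDist q) (A : α → Prop) :
    ∑ a, q a * (if A a then (1 : ℝ) else 0) ≤ 1 := by
  refine (sum_le_sum fun a _ => ?_).trans_eq hq.2
  split_ifs
  · rw [mul_one]
  · rw [mul_zero]
    exact hq.1 a

theorem IsDist.sum_pi_exists (hq : IsDist q) (A : α → Prop) (n : ℕ) :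
    ∑ c : Fin n → α, (∏ i, q (c i)) * (if ∃ i, A (c i) then (1 : ℝ) else 0)
      = 1 - (1 - ∑ a, q a * (if A a then (1 : ℝ) else 0)) ^ n := by
  have hcompl : ∀ c : Fin n → α, (∏ i, q (c i)) * (if ∃ i, A (c i) then (1 : ℝ) else 0)
      = ∏ i, q (c i) - ∏ i, (q (c i) - q (c i) * (if A (c i) then (1 : ℝ) else 0)) := by
    intro c
    split_ifs with h
    · obtain ⟨i, hi⟩ := h
      have hzero : ∏ i, (q (c i) - q (c i) * (if A (c i) then (1 : ℝ) else 0)) = 0 :=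
        prod_eq_zero (mem_univ i) (by rw [if_pos hi, mul_one, sub_self])
      rw [hzero, mul_one, sub_zero]
    · rw [mul_zero, eq_comm, sub_eq_zero]
      exact prod_congr rfl fun i _ => by rw [if_neg fun hi => h ⟨i, hi⟩, mul_zero, sub_zero]
  simp only [hcompl]
  rw [sum_sub_distrib, (hq.pi n).2,
    ← Fintype.sum_pow (fun a => q a - q a * (if A a then (1 : ℝ) else 0)), sum_sub_distrib, hq.2]

theorem IsDist.sum_pi_mul_card_rpow_neg_le (hq : IsDist q) (b : α) {β u : ℝ} (hβ0 : 0 ≤ β)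
    (hβ1 : β ≤ 1) (hu : 1 ≤ u) (N : ℕ) :
    ∑ y : Fin N → α, (∏ n, q (y n)) * (#{n | y n = b} + u) ^ (-β) ≤ (u + q b / 2 * N) ^ (-β) := by
  induction N generalizing u with
  | zero => simp
  | succ N ih =>
    set v : ℝ := u + q b / 2 * N with hv
    have hv1 : 1 ≤ v := hu.trans (le_add_of_nonneg_right (by have := hq.1 b; positivity))
    have hletter : ∀ c, q c * ∑ y : Fin N → α, (∏ n, q (y n)) *
        ((#{n | (Fin.cons c y : Fin (N + 1) → α) n = b} : ℝ) + u) ^ (-β)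
        ≤ q c * (v ^ (-β) + if c = b then (v + 1) ^ (-β) - v ^ (-β) else 0) := by
      intro c
      refine mul_le_mul_of_nonneg_left ?_ (hq.1 c)
      simp only [Fin.card_filter_univ_succ, Fin.cons_zero, Fin.cons_succ]
      split_ifs
      · have h := ih (u := u + 1) (by linarith)
        rw [show u + 1 + q b / 2 * N = v + 1 by rw [hv]; ring] at h
        simpa only [Nat.cast_add_one, add_assoc, add_comm (1 : ℝ) u, add_sub_cancel] using h
      · rw [add_zero]
        exact ih hu
    calc ∑ y : Fin (N + 1) → α, (∏ n, q (y n)) * (#{n | y n = b} + u) ^ (-β)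
        = ∑ c, q c * ∑ y : Fin N → α, (∏ n, q (y n)) *
            ((#{n | (Fin.cons c y : Fin (N + 1) → α) n = b} : ℝ) + u) ^ (-β) := by
          simp only [sum_pi_fin_succ, Fin.prod_univ_succ, Fin.cons_zero, Fin.cons_succ, mul_sum,
            mul_assoc]
      _ ≤ ∑ c, q c * (v ^ (-β) + if c = b then (v + 1) ^ (-β) - v ^ (-β) else 0) :=
          sum_le_sum fun c _ => hletter c
      _ = q b * (v + 1) ^ (-β) + (1 - q b) * v ^ (-β) := by
          simp only [mul_add, sum_add_distrib, ← sum_mul, hq.2, mul_ite, mul_zero, sum_ite_eq',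
            mem_univ, if_true]
          ring
      _ ≤ (v + q b / 2) ^ (-β) :=
          mul_rpow_neg_add_mul_rpow_neg_le (hq.1 b) (hq.le_one b) hv1 hβ0 hβ1
      _ = (u + q b / 2 * ↑(N + 1)) ^ (-β) := by
          rw [hv]; push_cast; ring_nf

end IsDist

/-! ### The random coding union bound -/

theorem IsDist.sum_pi_exists_ne {α β : Type*} [Fintype α] [Fintype β] {q : α → ℝ} (hq : IsDist q)
    (h : α → β → ℝ) (A : α → β → α → Prop) {n : ℕ} (m : Fin (n + 1)) :
    ∑ c : Fin (n + 1) → α, (∏ i, q (c i)) * ∑ y, h (c m) y *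
        (if ∃ m', m' ≠ m ∧ A (c m) y (c m') then (1 : ℝ) else 0)
      = ∑ x, ∑ y, q x * h x y *
          (1 - (1 - ∑ x', q x' * if A x y x' then (1 : ℝ) else 0) ^ n) := by
  have hex : ∀ x (c : Fin n → α) y,
      (∃ m', m' ≠ m ∧ A x y ((m.insertNth x c : Fin (n + 1) → α) m')) ↔ ∃ i, A x y (c i) := by
    intro x c y
    constructor
    · rintro ⟨m', hm', hA⟩
      obtain ⟨i, rfl⟩ := Fin.exists_succAbove_eq hm'
      exact ⟨i, by simpa only [Fin.insertNth_apply_succAbove] using hA⟩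
    · rintro ⟨i, hA⟩
      exact ⟨m.succAbove i, Fin.succAbove_ne m i,
        by simpa only [Fin.insertNth_apply_succAbove] using hA⟩
  rw [← (Fin.insertNthEquiv (fun _ : Fin (n + 1) => α) m).sum_comp, Fintype.sum_prod_type]
  refine sum_congr rfl fun x _ => ?_
  simp only [Fin.insertNthEquiv_apply, Fin.prod_univ_succAbove _ m, Fin.insertNth_apply_same,
    Fin.insertNth_apply_succAbove, hex, ← hq.sum_pi_exists, mul_sum]
  rw [sum_comm]
  exact sum_congr rfl fun y _ => sum_congr rfl fun c _ => by ring

/-- The probability that a single independent codeword is at least as likely, given the output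
`y`, as the transmitted codeword `x`. -/
noncomputable def pairwiseErrorProb {X Y : Type*} [Fintype X] (W : X → Y → ℝ) (Q : X → ℝ)
    {N : ℕ} (x : Fin N → X) (y : Fin N → Y) : ℝ :=
  ∑ x' : Fin N → X, (∏ n, Q (x' n)) * if Wn W x y ≤ Wn W x' y then (1 : ℝ) else 0

section UnionBound

variable {X Y : Type*} {W : X → Y → ℝ} {Q : X → ℝ}

theorem Wn_nonneg (hW : ∀ x y, 0 ≤ W x y) {N : ℕ} (x : Fin N → X) (y : Fin N → Y) :
    0 ≤ Wn W x y :=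
  prod_nonneg fun _ _ => hW _ _

variable [Fintype X] [Fintype Y]

theorem Pbar_eq (W : X → Y → ℝ) (hQ : IsDist Q) (N : ℕ) (R : ℝ) :
    Pbar W Q N R = ∑ y : Fin N → Y, ∑ x : Fin N → X, (∏ n, Q (x n)) * Wn W x y *
      (1 - (1 - pairwiseErrorProb W Q x y) ^ (nMsgs N R - 1)) := by
  obtain ⟨n, hn⟩ : ∃ n, nMsgs N R = n + 1 :=
    ⟨_, (Nat.succ_pred_eq_of_pos (Nat.ceil_pos.2 (exp_pos _))).symm⟩
  have hmessage := (hQ.pi N).sum_pi_exists_ne (Wn W) (fun x y x' => Wn W x y ≤ Wn W x' y) (n := n)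
  rw [Pbar, hn, Nat.add_sub_cancel, sum_comm (s := (univ : Finset (Fin N → Y)))]
  simp only [mul_left_comm, ← mul_sum]
  simp only [mul_sum (univ : Finset (Fin (n + 1)))]
  rw [sum_comm]
  simp only [hmessage]
  rw [sum_const, card_univ, Fintype.card_fin, nsmul_eq_mul, inv_mul_cancel_left₀ (by positivity)]
  rfl

theorem Pbar_le_union (hW : IsChannel W) (hQ : IsDist Q) (N : ℕ) (R : ℝ) :
    Pbar W Q N R ≤ ∑ y : Fin N → Y, ∑ x : Fin N → X, (∏ n, Q (x n)) * Wn W x y *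
      min 1 (exp (N * R) * pairwiseErrorProb W Q x y) := by
  rw [Pbar_eq W hQ]
  gcongr with y _ x _
  · exact mul_nonneg ((hQ.pi N).1 x) (Wn_nonneg hW.1 x y)
  set p := pairwiseErrorProb W Q x y
  have hp0 : 0 ≤ p := sum_nonneg fun x' _ =>
    mul_nonneg ((hQ.pi N).1 x') (by split_ifs <;> norm_num)
  have hp1 : p ≤ 1 := (hQ.pi N).sum_indicator_le_one fun x' => Wn W x y ≤ Wn W x' y
  have hn : ((nMsgs N R - 1 : ℕ) : ℝ) ≤ exp (N * R) := by
    have hceil : (nMsgs N R : ℝ) < exp (N * R) + 1 := Nat.ceil_lt_add_one (exp_pos _).le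
    have hone : 1 ≤ nMsgs N R := Nat.one_le_ceil_iff.2 (exp_pos _)
    rw [Nat.cast_sub hone, Nat.cast_one]
    linarith
  have hbernoulli := one_add_mul_le_pow (a := -p) (by linarith) (nMsgs N R - 1)
  rw [← sub_eq_add_neg] at hbernoulli
  refine le_min (sub_le_self _ (pow_nonneg (sub_nonneg.2 hp1) _)) ?_
  linarith [mul_le_mul_of_nonneg_right hn hp0]

end UnionBound

/-! ### Tilting -/

/-- The normalization `∑ x, Q(x) W(y|x)^{1/(1+ρ)}` of the tilted backward channel `PXgY`. -/
noncomputable def tiltSum {X Y : Type*} [Fintype X] (W : X → Y → ℝ) (Q : X → ℝ) (ρ : ℝ)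
    (y : Y) : ℝ :=
  ∑ x, Q x * W x y ^ (1 / (1 + ρ))

/-- The log-likelihood of the codeword `x` given the output `y`. It is meaningful only where
`Wn W x y` is positive, since letters of probability zero contribute `log 0 = 0`. -/
noncomputable def logLikelihood {X Y : Type*} (W : X → Y → ℝ) {N : ℕ} (x : Fin N → X)
    (y : Fin N → Y) : ℝ :=
  ∑ n, log (W (x n) (y n))

/-- The expectation of `f (logLikelihood W x y)` when `x` is drawn, given `y`, from the memoryless
extension of the tilted backward channel. -/
noncomputable def posteriorAverage {X Y : Type*} [Fintype X] (W : X → Y → ℝ) (Q : X → ℝ) (ρ : ℝ)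
    {N : ℕ} (y : Fin N → Y) (f : ℝ → ℝ) : ℝ :=
  productAverage (fun n x => PXgY W Q ρ x (y n)) (fun n x => log (W x (y n))) f

/-- The exponential rate at which a term of the tilted union bound decays with the distance of the
log-likelihood from the value at which the bound switches to `1`. -/
noncomputable def tiltDecay (ρ : ℝ) : ℝ := min ρ (1 - ρ) / (1 + ρ)

theorem tiltDecay_pos {ρ : ℝ} (hρ0 : 0 < ρ) (hρ1 : ρ < 1) : 0 < tiltDecay ρ :=
  div_pos (lt_min hρ0 (sub_pos.2 hρ1)) (by positivity)

theorem tiltDecay_le {ρ : ℝ} (hρ : 0 ≤ ρ) : tiltDecay ρ ≤ 1 / (1 + ρ) :=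
  div_le_div_of_nonneg_right ((min_le_right _ _).trans (by linarith)) (by positivity)

theorem min_one_exp_le (ρ t : ℝ) : min 1 (exp t) ≤ exp (ρ * t - min ρ (1 - ρ) * |t|) := by
  rcases le_total 0 t with ht | ht
  · refine (min_le_left _ _).trans ?_
    rw [Real.one_le_exp_iff, abs_of_nonneg ht]
    nlinarith [min_le_left ρ (1 - ρ)]
  · refine (min_le_right _ _).trans ?_
    rw [exp_le_exp, abs_of_nonpos ht]
    nlinarith [min_le_right ρ (1 - ρ)]

theorem min_one_mul_exp_le {ρ T : ℝ} (hρ : -1 < ρ) (hT : 0 < T) (l : ℝ) :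
    min 1 (T * exp (-(1 / (1 + ρ)) * l))
      ≤ T ^ ρ * exp (-(ρ / (1 + ρ)) * l) * exp (-tiltDecay ρ * |l - (1 + ρ) * log T|) := by
  have hρ' : 0 < 1 + ρ := by linarith
  have hexp : T * exp (-(1 / (1 + ρ)) * l) = exp ((1 + ρ)⁻¹ * ((1 + ρ) * log T - l)) := by
    rw [mul_sub, inv_mul_cancel_left₀ hρ'.ne', sub_eq_add_neg, exp_add, exp_log hT, one_div,
      neg_mul]
  rw [hexp, Real.rpow_def_of_pos hT, ← exp_add, ← exp_add]
  refine (min_one_exp_le ρ _).trans_eq ?_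
  rw [abs_mul, abs_of_pos (inv_pos.2 hρ'), abs_sub_comm, tiltDecay]
  congr 1
  field_simp
  ring

section Tilt

variable {X Y : Type*} {W : X → Y → ℝ} {Q : X → ℝ} {N : ℕ}

theorem pos_of_Wn_pos (hW : ∀ x y, 0 ≤ W x y) {x : Fin N → X} {y : Fin N → Y}
    (h : 0 < Wn W x y) (n : Fin N) : 0 < W (x n) (y n) :=
  (hW _ _).lt_of_ne' (prod_ne_zero_iff.1 h.ne' n (mem_univ n))

theorem exp_logLikelihood {x : Fin N → X} {y : Fin N → Y} (h : ∀ n, 0 < W (x n) (y n)) :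
    exp (logLikelihood W x y) = Wn W x y := by
  rw [logLikelihood, Real.exp_sum, Wn]
  exact prod_congr rfl fun n _ => exp_log (h n)

variable [Fintype X]

theorem posteriorAverage_eq (ρ : ℝ) (y : Fin N → Y) (f : ℝ → ℝ) :
    posteriorAverage W Q ρ y f
      = ∑ x : Fin N → X, (∏ n, PXgY W Q ρ (x n) (y n)) * f (logLikelihood W x y) :=
  rfl

theorem tiltSum_nonneg (hW : ∀ x y, 0 ≤ W x y) (hQ : ∀ x, 0 ≤ Q x) (ρ : ℝ) (y : Y) :
    0 ≤ tiltSum W Q ρ y :=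
  sum_nonneg fun x _ => mul_nonneg (hQ x) (Real.rpow_nonneg (hW x y) _)

theorem tiltSum_pos (hW : ∀ x y, 0 ≤ W x y) (hQ : ∀ x, 0 ≤ Q x) (ρ : ℝ) {x : X} {y : Y}
    (hx : 0 < Q x) (hxy : 0 < W x y) : 0 < tiltSum W Q ρ y :=
  sum_pos' (fun x _ => mul_nonneg (hQ x) (Real.rpow_nonneg (hW x y) _))
    ⟨x, mem_univ x, mul_pos hx (Real.rpow_pos_of_pos hxy _)⟩

theorem PXgY_nonneg (hW : ∀ x y, 0 ≤ W x y) (hQ : ∀ x, 0 ≤ Q x) (ρ : ℝ) (x : X) (y : Y) :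
    0 ≤ PXgY W Q ρ x y :=
  div_nonneg (mul_nonneg (hQ x) (Real.rpow_nonneg (hW x y) _)) (tiltSum_nonneg hW hQ ρ y)

theorem PXgY_pos (hW : ∀ x y, 0 ≤ W x y) (hQ : ∀ x, 0 ≤ Q x) (ρ : ℝ) {x : X} {y : Y}
    (hx : 0 < Q x) (hxy : 0 < W x y) : 0 < PXgY W Q ρ x y :=
  div_pos (mul_pos hx (Real.rpow_pos_of_pos hxy _)) (tiltSum_pos hW hQ ρ hx hxy)

theorem sum_PXgY_le_one (W : X → Y → ℝ) (Q : X → ℝ) (ρ : ℝ) (y : Y) :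
    ∑ x, PXgY W Q ρ x y ≤ 1 := by
  simp only [PXgY, ← sum_div]
  exact div_self_le_one _

theorem tiltSum_mul_PXgY_mul_exp (hW : ∀ x y, 0 ≤ W x y) (hQ : ∀ x, 0 ≤ Q x) (ρ : ℝ) {x : X}
    {y : Y} (hxy : 0 < W x y) :
    tiltSum W Q ρ y * PXgY W Q ρ x y * exp (-(1 / (1 + ρ)) * log (W x y)) = Q x := by
  rcases (hQ x).eq_or_lt with hx | hx
  · simp [PXgY, ← hx]
  · rw [PXgY, ← tiltSum, mul_div_cancel₀ _ (tiltSum_pos hW hQ ρ hx hxy).ne',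
      Real.rpow_def_of_pos hxy, mul_assoc, ← exp_add,
      show log (W x y) * (1 / (1 + ρ)) + -(1 / (1 + ρ)) * log (W x y) = 0 by ring, exp_zero,
      mul_one]

theorem prod_tiltSum_mul_prod_PXgY_mul_exp (hW : ∀ x y, 0 ≤ W x y) (hQ : ∀ x, 0 ≤ Q x) (ρ : ℝ)
    {x : Fin N → X} {y : Fin N → Y} (h : ∀ n, 0 < W (x n) (y n)) :
    (∏ n, tiltSum W Q ρ (y n)) * (∏ n, PXgY W Q ρ (x n) (y n)) *
      exp (-(1 / (1 + ρ)) * logLikelihood W x y) = ∏ n, Q (x n) := by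
  rw [logLikelihood, mul_sum, Real.exp_sum, ← prod_mul_distrib, ← prod_mul_distrib]
  exact prod_congr rfl fun n _ => tiltSum_mul_PXgY_mul_exp hW hQ ρ (h n)

theorem prod_mul_Wn_eq (hW : ∀ x y, 0 ≤ W x y) (hQ : ∀ x, 0 ≤ Q x) {ρ : ℝ} (hρ : -1 < ρ)
    {x : Fin N → X} {y : Fin N → Y} (hx : 0 < Wn W x y) :
    (∏ n, Q (x n)) * Wn W x y = (∏ n, tiltSum W Q ρ (y n)) * (∏ n, PXgY W Q ρ (x n) (y n)) *
      exp (ρ / (1 + ρ) * logLikelihood W x y) := by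
  have hx' := pos_of_Wn_pos hW hx
  rw [← prod_tiltSum_mul_prod_PXgY_mul_exp hW hQ ρ hx', ← exp_logLikelihood hx', mul_assoc,
    ← exp_add]
  have : 1 + ρ ≠ 0 := by linarith
  congr 2
  field_simp
  ring

/-- A codeword that beats `x` has the larger log-likelihood, and `Q` is the tilted posterior
times an exponentially decreasing function of the log-likelihood. -/
theorem pairwiseErrorProb_le (hW : ∀ x y, 0 ≤ W x y) (hQ : ∀ x, 0 ≤ Q x) {ρ κ : ℝ}
    (hκ : κ ≤ 1 / (1 + ρ)) {x : Fin N → X} {y : Fin N → Y} (hx : 0 < Wn W x y) :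
    pairwiseErrorProb W Q x y
      ≤ (∏ n, tiltSum W Q ρ (y n)) * exp (-(1 / (1 + ρ)) * logLikelihood W x y) *
        posteriorAverage W Q ρ y fun t => exp (-κ * |t - logLikelihood W x y|) := by
  rw [posteriorAverage_eq, mul_sum]
  refine sum_le_sum fun x' _ => ?_
  have hA : 0 ≤ ∏ n, tiltSum W Q ρ (y n) := prod_nonneg fun n _ => tiltSum_nonneg hW hQ ρ (y n)
  have hP : 0 ≤ ∏ n, PXgY W Q ρ (x' n) (y n) := prod_nonneg fun n _ => PXgY_nonneg hW hQ ρ _ _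
  split_ifs with hle
  · have hx' := pos_of_Wn_pos hW (hx.trans_le hle)
    have hlog : logLikelihood W x y ≤ logLikelihood W x' y := by
      rwa [← exp_le_exp, exp_logLikelihood (pos_of_Wn_pos hW hx), exp_logLikelihood hx']
    have hexp : exp (-(1 / (1 + ρ)) * logLikelihood W x' y)
        ≤ exp (-(1 / (1 + ρ)) * logLikelihood W x y) *
          exp (-κ * |logLikelihood W x' y - logLikelihood W x y|) := by
      rw [← exp_add, exp_le_exp, abs_of_nonneg (sub_nonneg.2 hlog)]
      nlinarith
    rw [mul_one, ← prod_tiltSum_mul_prod_PXgY_mul_exp hW hQ ρ hx']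
    refine (mul_le_mul_of_nonneg_left hexp (mul_nonneg hA hP)).trans_eq ?_
    ring
  · rw [mul_zero]
    positivity

theorem min_one_mul_pairwiseErrorProb_le (hW : ∀ x y, 0 ≤ W x y) (hQ : ∀ x, 0 ≤ Q x)
    {ρ M D : ℝ} (hρ : 0 ≤ ρ) (hM : 0 < M) (hD : 0 < D) {x : Fin N → X} {y : Fin N → Y}
    (hA : 0 < ∏ n, tiltSum W Q ρ (y n)) (hx : 0 < Wn W x y)
    (hDx : posteriorAverage W Q ρ y (fun t => exp (-tiltDecay ρ * |t - logLikelihood W x y|))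
      ≤ D) :
    min 1 (M * pairwiseErrorProb W Q x y)
      ≤ (M * (∏ n, tiltSum W Q ρ (y n)) * D) ^ ρ * exp (-(ρ / (1 + ρ)) * logLikelihood W x y) *
        exp (-tiltDecay ρ *
          |logLikelihood W x y - (1 + ρ) * log (M * (∏ n, tiltSum W Q ρ (y n)) * D)|) := by
  set A := ∏ n, tiltSum W Q ρ (y n)
  set l := logLikelihood W x y
  refine (min_le_min_left 1 ?_).trans (min_one_mul_exp_le (by linarith) (by positivity) l)
  calc M * pairwiseErrorProb W Q x y ≤ M * (A * exp (-(1 / (1 + ρ)) * l) * D) := by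
        gcongr
        exact (pairwiseErrorProb_le hW hQ (tiltDecay_le hρ) hx).trans
          (mul_le_mul_of_nonneg_left hDx (by positivity))
    _ = M * A * D * exp (-(1 / (1 + ρ)) * l) := by ring

theorem prod_mul_Wn_mul_min_le (hW : ∀ x y, 0 ≤ W x y) (hQ : ∀ x, 0 ≤ Q x) {ρ M D : ℝ}
    (hρ : 0 ≤ ρ) (hM : 0 < M) (hD : 0 < D) {x : Fin N → X} {y : Fin N → Y}
    (hDx : posteriorAverage W Q ρ y (fun t => exp (-tiltDecay ρ * |t - logLikelihood W x y|))
      ≤ D) :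
    (∏ n, Q (x n)) * Wn W x y * min 1 (M * pairwiseErrorProb W Q x y)
      ≤ M ^ ρ * (∏ n, tiltSum W Q ρ (y n)) ^ (1 + ρ) * D ^ ρ *
        ((∏ n, PXgY W Q ρ (x n) (y n)) * exp (-tiltDecay ρ *
          |logLikelihood W x y - (1 + ρ) * log (M * (∏ n, tiltSum W Q ρ (y n)) * D)|)) := by
  set A := ∏ n, tiltSum W Q ρ (y n) with hA
  set P := ∏ n, PXgY W Q ρ (x n) (y n) with hPdef
  set l := logLikelihood W x y
  have hA0 : 0 ≤ A := prod_nonneg fun n _ => tiltSum_nonneg hW hQ ρ (y n)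
  have hP : 0 ≤ P := prod_nonneg fun n _ => PXgY_nonneg hW hQ ρ _ _
  rcases (Wn_nonneg hW x y).eq_or_lt with hx | hx
  · rw [← hx, mul_zero, zero_mul]
    positivity
  rw [prod_mul_Wn_eq hW hQ (ρ := ρ) (by linarith) hx, ← hA, ← hPdef]
  rcases hA0.eq_or_lt with hA' | hA'
  · rw [← hA', zero_mul, zero_mul, zero_mul]
    positivity
  calc A * P * exp (ρ / (1 + ρ) * l) * min 1 (M * pairwiseErrorProb W Q x y)
      ≤ A * P * exp (ρ / (1 + ρ) * l) * ((M * A * D) ^ ρ * exp (-(ρ / (1 + ρ)) * l) *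
          exp (-tiltDecay ρ * |l - (1 + ρ) * log (M * A * D)|)) := by
        gcongr
        exact min_one_mul_pairwiseErrorProb_le hW hQ hρ hM hD hA' hx hDx
    _ = A * (M * A * D) ^ ρ * (P * exp (-tiltDecay ρ * |l - (1 + ρ) * log (M * A * D)|)) := by
        rw [neg_mul, exp_neg]
        field_simp
    _ = M ^ ρ * A ^ (1 + ρ) * D ^ ρ *
          (P * exp (-tiltDecay ρ * |l - (1 + ρ) * log (M * A * D)|)) := by
        rw [Real.mul_rpow (by positivity) hD.le, Real.mul_rpow hM.le hA0, Real.rpow_add hA',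
          Real.rpow_one]
        ring

theorem sum_prod_mul_Wn_mul_min_le (hW : ∀ x y, 0 ≤ W x y) (hQ : ∀ x, 0 ≤ Q x) {ρ M D : ℝ}
    (hρ : 0 ≤ ρ) (hM : 0 < M) (hD : 0 < D) (y : Fin N → Y)
    (hDy : ∀ a, posteriorAverage W Q ρ y (fun t => exp (-tiltDecay ρ * |t - a|)) ≤ D) :
    ∑ x : Fin N → X, (∏ n, Q (x n)) * Wn W x y * min 1 (M * pairwiseErrorProb W Q x y)
      ≤ M ^ ρ * (∏ n, tiltSum W Q ρ (y n)) ^ (1 + ρ) * D ^ (1 + ρ) := by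
  have hA : 0 ≤ ∏ n, tiltSum W Q ρ (y n) := prod_nonneg fun n _ => tiltSum_nonneg hW hQ ρ (y n)
  refine (sum_le_sum fun x _ => prod_mul_Wn_mul_min_le hW hQ hρ hM hD (hDy _)).trans ?_
  rw [← mul_sum, add_comm 1 ρ, Real.rpow_add hD, Real.rpow_one, ← mul_assoc]
  exact mul_le_mul_of_nonneg_left (hDy _) (by positivity)

theorem exists_posteriorAverage_le (hW : ∀ x y, 0 ≤ W x y) (hQ : ∀ x, 0 ≤ Q x) (ρ : ℝ) {κ : ℝ}
    (hκ : 0 < κ) {x₁ x₂ : X} {y₀ : Y} (hx₁ : 0 < Q x₁) (hx₂ : 0 < Q x₂) (hw₁ : 0 < W x₁ y₀)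
    (hlt : W x₁ y₀ < W x₂ y₀) :
    ∃ C : ℝ, 0 < C ∧ ∀ (N : ℕ) (y : Fin N → Y) (a : ℝ),
      posteriorAverage W Q ρ y (fun t => exp (-κ * |t - a|))
        ≤ C * (#{n | y n = y₀} + 1) ^ (-(1 / 2) : ℝ) := by
  set δ := log (W x₂ y₀) - log (W x₁ y₀) with hδ
  have hδ0 : 0 < δ := sub_pos.2 (log_lt_log hw₁ hlt)
  set m := min (PXgY W Q ρ x₁ y₀) (PXgY W Q ρ x₂ y₀)
  have hm0 : 0 < m := lt_min (PXgY_pos hW hQ ρ hx₁ hw₁) (PXgY_pos hW hQ ρ hx₂ (hw₁.trans hlt))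
  have hm1 : m ≤ 1 := (min_le_left _ _).trans
    ((single_le_sum (fun x _ => PXgY_nonneg hW hQ ρ x y₀) (mem_univ x₁)).trans
      (sum_PXgY_le_one W Q ρ y₀))
  set B := 2 * (1 - exp (-κ * δ))⁻¹
  have hB : 0 < B := mul_pos two_pos
    (inv_pos.2 (sub_pos.2 (Real.exp_lt_one_iff.2 (by nlinarith [mul_pos hκ hδ0]))))
  refine ⟨B * m ^ (-(1 / 2) : ℝ), by positivity, fun N y a => ?_⟩
  calc posteriorAverage W Q ρ y (fun t => exp (-κ * |t - a|))
      ≤ B * (m * #{n | y n = y₀} + 1) ^ (-(1 / 2) : ℝ) := by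
        refine productAverage_le (fun n x => PXgY_nonneg hW hQ ρ x (y n))
          (fun n => sum_PXgY_le_one W Q ρ (y n)) hm0.le (δ := δ) ?_ (fun t => (exp_pos _).le) ?_
        · rintro n rfl
          exact ⟨x₁, x₂, fun h => hlt.ne (by rw [h]), min_le_left _ _, min_le_right _ _,
            by rw [hδ]; ring⟩
        · intro b k
          simpa only [add_sub_right_comm] using sum_exp_neg_abs_le hκ hδ0 (b - a) k
    _ ≤ B * (m * (#{n | y n = y₀} + 1)) ^ (-(1 / 2) : ℝ) := by
        gcongr B * ?_
        exact Real.rpow_le_rpow_of_nonpos (by positivity) (by linarith) (by norm_num)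
    _ = B * m ^ (-(1 / 2) : ℝ) * (#{n | y n = y₀} + 1) ^ (-(1 / 2) : ℝ) := by
        rw [Real.mul_rpow hm0.le (by positivity)]
        ring

end Tilt

/-! ### The bound for a fixed tilt -/

section FixedTilt

variable {X Y : Type*} {W : X → Y → ℝ} {Q : X → ℝ}

theorem exists_lt_of_not_singular (hW : ∀ x y, 0 ≤ W x y) (hQ : ∀ x, 0 ≤ Q x)
    (hns : ¬ Singular W Q) :
    ∃ x₁ x₂ y, 0 < Q x₁ ∧ 0 < Q x₂ ∧ 0 < W x₁ y ∧ W x₁ y < W x₂ y := by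
  rw [Singular] at hns
  push Not at hns
  obtain ⟨x, y, z, hpos, hne⟩ := hns
  have hpos' := hpos.ne'
  simp only [ne_eq, mul_eq_zero, not_or] at hpos'
  obtain ⟨⟨hx, hxy⟩, hz, hzy⟩ := hpos'
  replace hx := (hQ x).lt_of_ne' hx
  replace hz := (hQ z).lt_of_ne' hz
  rcases hne.lt_or_gt with h | h
  · exact ⟨x, z, y, hx, hz, (hW x y).lt_of_ne' hxy, h⟩
  · exact ⟨z, x, y, hz, hx, (hW z y).lt_of_ne' hzy, h⟩

variable [Fintype X] [Fintype Y]

theorem sum_tiltSum_rpow_pos (hW : IsChannel W) (hQ : IsDist Q) (ρ : ℝ) :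
    0 < ∑ y, tiltSum W Q ρ y ^ (1 + ρ) := by
  obtain ⟨x, hx⟩ := hQ.exists_pos
  obtain ⟨y, hxy⟩ := IsDist.exists_pos ⟨hW.1 x, hW.2 x⟩
  exact sum_pos' (fun y _ => Real.rpow_nonneg (tiltSum_nonneg hW.1 hQ.1 ρ y) _)
    ⟨y, mem_univ y, Real.rpow_pos_of_pos (tiltSum_pos hW.1 hQ.1 ρ hx hxy) _⟩

theorem exp_neg_Eo (hW : IsChannel W) (hQ : IsDist Q) (ρ : ℝ) :
    exp (-Eo W ρ Q) = ∑ y, tiltSum W Q ρ y ^ (1 + ρ) := by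
  rw [Eo, neg_neg]
  exact exp_log (sum_tiltSum_rpow_pos hW hQ ρ)

theorem isDist_fRho (hW : IsChannel W) (hQ : IsDist Q) (ρ : ℝ) : IsDist (fRho W Q ρ) := by
  refine ⟨fun y => div_nonneg (Real.rpow_nonneg (tiltSum_nonneg hW.1 hQ.1 ρ y) _)
    (sum_tiltSum_rpow_pos hW hQ ρ).le, ?_⟩
  simp only [fRho, ← sum_div]
  exact div_self (sum_tiltSum_rpow_pos hW hQ ρ).ne'

theorem fRho_pos (hW : IsChannel W) (hQ : IsDist Q) (ρ : ℝ) {x : X} {y : Y} (hx : 0 < Q x)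
    (hxy : 0 < W x y) : 0 < fRho W Q ρ y :=
  div_pos (Real.rpow_pos_of_pos (tiltSum_pos hW.1 hQ.1 ρ hx hxy) _)
    (sum_tiltSum_rpow_pos hW hQ ρ)

theorem tiltSum_rpow_eq (hW : IsChannel W) (hQ : IsDist Q) (ρ : ℝ) (y : Y) :
    tiltSum W Q ρ y ^ (1 + ρ) = exp (-Eo W ρ Q) * fRho W Q ρ y := by
  rw [exp_neg_Eo hW hQ]
  exact (mul_div_cancel₀ _ (sum_tiltSum_rpow_pos hW hQ ρ).ne').symm

theorem prod_tiltSum_rpow_eq (hW : IsChannel W) (hQ : IsDist Q) (ρ : ℝ) {N : ℕ}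
    (y : Fin N → Y) :
    (∏ n, tiltSum W Q ρ (y n)) ^ (1 + ρ) = exp (-N * Eo W ρ Q) * ∏ n, fRho W Q ρ (y n) := by
  rw [← Real.finsetProd_rpow _ _ fun n _ => tiltSum_nonneg hW.1 hQ.1 ρ (y n)]
  simp only [tiltSum_rpow_eq hW hQ, prod_mul_distrib, prod_const, card_univ, Fintype.card_fin,
    ← Real.exp_nat_mul, neg_mul, mul_neg]

theorem Pbar_le_of_not_singular (hW : IsChannel W) (hQ : IsDist Q) (hns : ¬ Singular W Q) {ρ : ℝ}
    (hρ0 : 0 < ρ) (hρ1 : ρ < 1) :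
    ∃ K : ℝ, 0 < K ∧ ∀ (N : ℕ) (R : ℝ), 0 < N →
      Pbar W Q N R ≤ K * N ^ (-((1 + ρ) / 2)) * exp (-N * (-ρ * R + Eo W ρ Q)) := by
  obtain ⟨x₁, x₂, y₀, hx₁, hx₂, hw₁, hlt⟩ := exists_lt_of_not_singular hW.1 hQ.1 hns
  obtain ⟨C, hC, hpost⟩ := exists_posteriorAverage_le hW.1 hQ.1 ρ (tiltDecay_pos hρ0 hρ1)
    hx₁ hx₂ hw₁ hlt
  have hf : 0 < fRho W Q ρ y₀ := fRho_pos hW hQ ρ hx₁ hw₁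
  set f := fRho W Q ρ
  refine ⟨C ^ (1 + ρ) * (f y₀ / 2) ^ (-((1 + ρ) / 2)), by positivity, fun N R hN => ?_⟩
  calc Pbar W Q N R
      ≤ ∑ y : Fin N → Y, exp (N * R) ^ ρ * (∏ n, tiltSum W Q ρ (y n)) ^ (1 + ρ) *
          (C * (#{n | y n = y₀} + 1) ^ (-(1 / 2) : ℝ)) ^ (1 + ρ) :=
        (Pbar_le_union hW hQ N R).trans <| sum_le_sum fun y _ =>
          sum_prod_mul_Wn_mul_min_le hW.1 hQ.1 hρ0.le (exp_pos _) (by positivity) y (hpost N y)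
    _ = exp (-N * (-ρ * R + Eo W ρ Q)) * C ^ (1 + ρ) *
          ∑ y : Fin N → Y, (∏ n, f (y n)) * (#{n | y n = y₀} + 1) ^ (-((1 + ρ) / 2)) := by
        rw [mul_sum]
        refine sum_congr rfl fun y _ => ?_
        rw [prod_tiltSum_rpow_eq hW hQ, Real.mul_rpow hC.le (by positivity),
          ← Real.rpow_mul (by positivity), ← Real.exp_mul,
          show -(1 / 2) * (1 + ρ) = -((1 + ρ) / 2) by ring,
          show -N * (-ρ * R + Eo W ρ Q) = N * R * ρ + -N * Eo W ρ Q by ring, exp_add]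
        ring
    _ ≤ exp (-N * (-ρ * R + Eo W ρ Q)) * C ^ (1 + ρ) *
          (1 + f y₀ / 2 * N) ^ (-((1 + ρ) / 2)) := by
        gcongr
        exact (isDist_fRho hW hQ ρ).sum_pi_mul_card_rpow_neg_le y₀ (by linarith) (by linarith)
          le_rfl N
    _ ≤ exp (-N * (-ρ * R + Eo W ρ Q)) * C ^ (1 + ρ) *
          (f y₀ / 2 * N) ^ (-((1 + ρ) / 2)) := by
        gcongr ?_ * ?_
        exact Real.rpow_le_rpow_of_nonpos (by positivity) (by linarith) (by linarith)
    _ = _ := by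
        rw [Real.mul_rpow (by positivity) (by positivity)]
        ring

end FixedTilt

/-! ### The random coding exponent -/

theorem sub_mul_nonpos_of_isMaxOn {f : ℝ → ℝ} {s : Set ℝ} {a b d : ℝ} (hs : Convex ℝ s)
    (ha : a ∈ s) (hb : b ∈ s) (hmax : IsMaxOn f s a) (hd : HasDerivWithinAt f d s a) :
    (b - a) * d ≤ 0 :=
  hmax.localize.hasFDerivWithinAt_nonpos hd.hasFDerivWithinAt
    (sub_mem_posTangentConeAt_of_segment_subset (hs.segment_subset ha hb))

theorem hasDerivAt_const_rpow_one_div {w ρ : ℝ} (hw : 0 ≤ w) (hρ : -1 < ρ) :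
    HasDerivAt (fun ρ => w ^ (1 / (1 + ρ))) (-(w ^ (1 / (1 + ρ)) * log w) / (1 + ρ) ^ 2) ρ := by
  rcases hw.eq_or_lt with rfl | hw
  · rw [log_zero, mul_zero, neg_zero, zero_div]
    refine (hasDerivAt_const ρ (0 : ℝ)).congr_of_eventuallyEq ?_
    filter_upwards [lt_mem_nhds hρ] with t ht
    exact Real.zero_rpow (one_div_ne_zero (by linarith))
  · have hinv : HasDerivAt (fun ρ : ℝ => 1 / (1 + ρ)) (-1 / (1 + ρ) ^ 2) ρ := by
      simpa only [one_div] using ((hasDerivAt_id' ρ).const_add 1).fun_inv (by linarith)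
    exact (hinv.const_rpow hw).congr_deriv (by ring)

/-- The derivative of `tiltSum W Q ρ y` with respect to `ρ`. Letters with `W x y = 0` contribute
nothing, by the convention `log 0 = 0`. -/
noncomputable def tiltSumDeriv {X Y : Type*} [Fintype X] (W : X → Y → ℝ) (Q : X → ℝ) (ρ : ℝ)
    (y : Y) : ℝ :=
  ∑ x, Q x * (-(W x y ^ (1 / (1 + ρ)) * log (W x y)) / (1 + ρ) ^ 2)

section Exponent

variable {X Y : Type*} [Fintype X] {W : X → Y → ℝ} {Q : X → ℝ} {ρ : ℝ}

theorem hasDerivAt_tiltSum (hW : ∀ x y, 0 ≤ W x y) (Q : X → ℝ) (hρ : -1 < ρ) (y : Y) :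
    HasDerivAt (fun ρ => tiltSum W Q ρ y) (tiltSumDeriv W Q ρ y) ρ :=
  HasDerivAt.fun_sum fun x _ => (hasDerivAt_const_rpow_one_div (hW x y) hρ).const_mul (Q x)

theorem hasDerivAt_tiltSum_rpow (hW : ∀ x y, 0 ≤ W x y) (hQ : ∀ x, 0 ≤ Q x) (hρ : -1 < ρ)
    (y : Y) :
    HasDerivAt (fun ρ => tiltSum W Q ρ y ^ (1 + ρ))
      (tiltSumDeriv W Q ρ y * (1 + ρ) * tiltSum W Q ρ y ^ ρ +
        tiltSum W Q ρ y ^ (1 + ρ) * log (tiltSum W Q ρ y)) ρ := by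
  by_cases h : ∃ x, 0 < Q x ∧ 0 < W x y
  · obtain ⟨x, hx, hxy⟩ := h
    refine ((hasDerivAt_tiltSum hW Q hρ y).rpow ((hasDerivAt_id ρ).const_add 1)
      (tiltSum_pos hW hQ ρ hx hxy)).congr_deriv ?_
    rw [id, add_sub_cancel_left, one_mul]
  · have h0 : ∀ x, Q x = 0 ∨ W x y = 0 := fun x => by
      contrapose! h
      exact ⟨x, (hQ x).lt_of_ne' h.1, (hW x y).lt_of_ne' h.2⟩
    have hzero : ∀ t : ℝ, -1 < t → tiltSum W Q t y = 0 := fun t ht =>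
      sum_eq_zero fun x _ => by
        rcases h0 x with hx | hx
        · rw [hx, zero_mul]
        · rw [hx, Real.zero_rpow (one_div_ne_zero (by linarith)), mul_zero]
    have hderiv : tiltSumDeriv W Q ρ y = 0 :=
      sum_eq_zero fun x _ => by rcases h0 x with hx | hx <;> simp [hx]
    rw [hderiv, hzero ρ hρ, log_zero, mul_zero, zero_mul, zero_mul, add_zero]
    refine (hasDerivAt_const ρ (0 : ℝ)).congr_of_eventuallyEq ?_
    filter_upwards [lt_mem_nhds hρ] with t ht
    rw [hzero t ht, Real.zero_rpow (by linarith)]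

variable [Fintype Y]

theorem hasDerivAt_Eo (hW : IsChannel W) (hQ : IsDist Q) (hρ : -1 < ρ) :
    HasDerivAt (fun ρ => Eo W ρ Q)
      (-((∑ y, (tiltSumDeriv W Q ρ y * (1 + ρ) * tiltSum W Q ρ y ^ ρ +
        tiltSum W Q ρ y ^ (1 + ρ) * log (tiltSum W Q ρ y))) /
          ∑ y, tiltSum W Q ρ y ^ (1 + ρ))) ρ :=
  ((HasDerivAt.fun_sum fun y _ => hasDerivAt_tiltSum_rpow hW.1 hQ.1 hρ y).log
    (sum_tiltSum_rpow_pos hW hQ ρ).ne').fun_neg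

theorem hasDerivAt_Eo_zero (hW : IsChannel W) (hQ : IsDist Q) :
    HasDerivAt (fun ρ => Eo W ρ Q) (MI W Q) 0 := by
  refine (hasDerivAt_Eo hW hQ (ρ := 0) (by norm_num)).congr_deriv ?_
  have htilt : ∀ y, tiltSum W Q 0 y = ∑ x, Q x * W x y := fun y => by simp [tiltSum]
  have hsum : ∑ y, ∑ x, Q x * W x y = 1 := by
    rw [sum_comm]
    simp only [← mul_sum, hW.2, mul_one, hQ.2]
  simp only [add_zero, Real.rpow_zero, Real.rpow_one, mul_one, tiltSumDeriv, htilt, hsum, one_pow,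
    div_one]
  rw [MI, sum_comm, ← sum_neg_distrib]
  refine sum_congr rfl fun y _ => ?_
  rw [sum_mul, ← sum_add_distrib, ← sum_neg_distrib]
  refine sum_congr rfl fun x _ => ?_
  rcases (mul_nonneg (hQ.1 x) (hW.1 x y)).eq_or_lt with h | h
  · linear_combination (log (∑ x', Q x' * W x' y) + log (W x y / ∑ x', Q x' * W x' y)
      - log (W x y)) * h
  · have hP : 0 < ∑ x', Q x' * W x' y :=
      sum_pos' (fun x' _ => mul_nonneg (hQ.1 x') (hW.1 x' y)) ⟨x, mem_univ x, h⟩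
    rw [log_div (right_ne_zero_of_mul h.ne') hP.ne']
    ring

theorem continuousOn_neg_mul_add_Eo (hW : IsChannel W) (hQ : IsDist Q) (R : ℝ) :
    ContinuousOn (fun ρ => -ρ * R + Eo W ρ Q) (Set.Icc 0 1) := by
  refine ContinuousOn.add (by fun_prop) fun ρ hρ => ?_
  exact (hasDerivAt_Eo hW hQ (by linarith [hρ.1])).continuousAt.continuousWithinAt

theorem le_ErQ (hW : IsChannel W) (hQ : IsDist Q) (R : ℝ) (hρ : ρ ∈ Set.Icc (0 : ℝ) 1) :
    -ρ * R + Eo W ρ Q ≤ ErQ W R Q :=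
  le_csSup (isCompact_Icc.image_of_continuousOn (continuousOn_neg_mul_add_Eo hW hQ R)).bddAbove
    (Set.mem_image_of_mem _ hρ)

theorem exists_mem_Ioo_ErQ_eq (hW : IsChannel W) (hQ : IsDist Q) {R : ℝ} (hR1 : RcrQ W Q < R)
    (hR2 : R < MI W Q) : ∃ ρ ∈ Set.Ioo (0 : ℝ) 1, ErQ W R Q = -ρ * R + Eo W ρ Q := by
  obtain ⟨ρ, hρ, hmax⟩ := isCompact_Icc.exists_isMaxOn (Set.nonempty_Icc.2 zero_le_one)
    (continuousOn_neg_mul_add_Eo hW hQ R)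
  have hval : ErQ W R Q = -ρ * R + Eo W ρ Q :=
    IsGreatest.csSup_eq ⟨Set.mem_image_of_mem _ hρ, by rintro _ ⟨t, ht, rfl⟩; exact hmax ht⟩
  have hvar : ∀ {d b : ℝ}, HasDerivAt (fun ρ => Eo W ρ Q) d ρ → b ∈ Set.Icc (0 : ℝ) 1 →
      (b - ρ) * (d - R) ≤ 0 := fun {d b} hd hb => by
    refine sub_mul_nonpos_of_isMaxOn (convex_Icc 0 1) hρ hb hmax (HasDerivAt.hasDerivWithinAt ?_)
    exact (((hasDerivAt_id' ρ).fun_neg.mul_const R).fun_add hd).congr_deriv (by ring)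
  have hne0 : ρ ≠ 0 := by
    rintro rfl
    linarith [hvar (hasDerivAt_Eo_zero hW hQ) (Set.right_mem_Icc.2 zero_le_one)]
  have hne1 : ρ ≠ 1 := by
    rintro rfl
    have hd : HasDerivAt (fun ρ => Eo W ρ Q) (RcrQ W Q) 1 :=
      (hasDerivAt_Eo hW hQ (by norm_num)).differentiableAt.hasDerivAt
    linarith [hvar hd (Set.left_mem_Icc.2 zero_le_one)]
  exact ⟨ρ, ⟨hρ.1.lt_of_ne' hne0, hρ.2.lt_of_ne hne1⟩, hval⟩

/-- Envelope theorem: `a ↦ -ρ a + Eo W ρ Q` supports `a ↦ ErQ W a Q` from below at `R`. Where the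
latter is not differentiable, `rhoStarQ` takes the junk value `0`. -/
theorem rhoStarQ_le (hW : IsChannel W) (hQ : IsDist Q) {R : ℝ} (hρ : ρ ∈ Set.Icc (0 : ℝ) 1)
    (hval : ErQ W R Q = -ρ * R + Eo W ρ Q) : rhoStarQ W Q R ≤ ρ := by
  by_cases hd : DifferentiableAt ℝ (fun a => ErQ W a Q) R
  · have hmin : IsLocalMin (fun a => ErQ W a Q + ρ * a) R := by
      refine Filter.Eventually.of_forall fun a => ?_
      simp only [hval]
      linarith [le_ErQ hW hQ a hρ]
    have hzero := hmin.hasDerivAt_eq_zero (hd.hasDerivAt.add ((hasDerivAt_id R).const_mul ρ))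
    rw [rhoStarQ]
    linarith
  · rw [rhoStarQ, deriv_zero_of_not_differentiableAt hd, neg_zero]
    exact hρ.1

end Exponent

end

theorem statement2_general {X Y : Type*} [Fintype X] [Fintype Y] {W : X → Y → ℝ}
    (hW : IsChannel W) {Q : X → ℝ} (hQ : IsDist Q) {R : ℝ} (hns : ¬ Singular W Q)
    (hR1 : RcrQ W Q < R) (hR2 : R < MI W Q) :
    ∃ K : ℝ, 0 < K ∧ ∀ N : ℕ, 0 < N →
      Pbar W Q N R ≤ K * N ^ (-(1 + rhoStarQ W Q R) / 2) * exp (-N * ErQ W R Q) := by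
  obtain ⟨ρ, hρ, hval⟩ := exists_mem_Ioo_ErQ_eq hW hQ hR1 hR2
  obtain ⟨K, hK, hbound⟩ := Pbar_le_of_not_singular hW hQ hns hρ.1 hρ.2
  refine ⟨K, hK, fun N hN => ?_⟩
  have hN1 : (1 : ℝ) ≤ N := by exact_mod_cast hN
  have hρ' := rhoStarQ_le hW hQ (Set.Ioo_subset_Icc_self hρ) hval
  rw [hval]
  refine (hbound N R hN).trans ?_
  gcongr
  linarith

/-- Refined random coding bound, nonsingular case: ensemble average error
probability is at most `K₂ · N^{-(1+ρ*_R(Q))/2} · exp(-N E_r(R,Q))`. -/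
theorem statement2 {X Y : Type*} [Fintype X] [Fintype Y] [Nonempty X] [Nonempty Y]
    (W : X → Y → ℝ) (hW : IsChannel W) (hcr : Rcr W < Capacity W)
    (Q : X → ℝ) (hQ : IsDist Q) (R : ℝ) (hR : 0 < R)
    (hns : ¬ Singular W Q) (hR1 : RcrQ W Q < R) (hR2 : R < MI W Q) :
    ∃ K : ℝ, 0 < K ∧ ∀ N : ℕ, 0 < N →
      Pbar W Q N R ≤
        K * (N : ℝ) ^ (-(1 + rhoStarQ W Q R) / 2) * Real.exp (-(N : ℝ) * ErQ W R Q) :=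
  statement2_general hW hQ hns hR1 hR2

end RCB
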